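/- Let Ω = {(x,y,u,p,q) ∈ ℝ⁵ : x·p + y·q − u > 0} and let f : ℝ⁵ → ℝ be a C¹ function on Ω of the variables (x,y,u,p,q). Then f satisfies on Ω the system f_x + p·f_u = 0, f_y + q·f_u = 0, (x·p + y·q − u)·f_p + 4x·f = 0, (x·p + y·q − u)·f_q + 4y·f = 0 if and only if there exists a constant C ∈ ℝ such that f(x,y,u,p,q) = C/(x·p + y·q − u)⁴ for all (x,y,u,p,q) ∈ Ω. -/

import Mathlib

/-- Points of `ℝ⁵` with coordinates `(x, y, u, p, q)`. -/
abbrev Jet1 : Type := ℝ × ℝ × ℝ × ℝ × ℝ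

/-- Partial derivative with respect to `x`, for a function of `(x, y, u, p, q)`. -/
noncomputable def dX (f : Jet1 → ℝ) (v : Jet1) : ℝ :=
  deriv (fun x => f (x, v.2.1, v.2.2.1, v.2.2.2.1, v.2.2.2.2)) v.1

/-- Partial derivative with respect to `y`, for a function of `(x, y, u, p, q)`. -/
noncomputable def dY (f : Jet1 → ℝ) (v : Jet1) : ℝ :=
  deriv (fun y => f (v.1, y, v.2.2.1, v.2.2.2.1, v.2.2.2.2)) v.2.1

/-- Partial derivative with respect to `u`, for a function of `(x, y, u, p, q)`. -/
noncomputable def dU (f : Jet1 → ℝ) (v : Jet1) : ℝ :=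
  deriv (fun u => f (v.1, v.2.1, u, v.2.2.2.1, v.2.2.2.2)) v.2.2.1

/-- Partial derivative with respect to `p`, for a function of `(x, y, u, p, q)`. -/
noncomputable def dP (f : Jet1 → ℝ) (v : Jet1) : ℝ :=
  deriv (fun p => f (v.1, v.2.1, v.2.2.1, p, v.2.2.2.2)) v.2.2.2.1

/-- Partial derivative with respect to `q`, for a function of `(x, y, u, p, q)`. -/
noncomputable def dQ (f : Jet1 → ℝ) (v : Jet1) : ℝ :=
  deriv (fun q => f (v.1, v.2.1, v.2.2.1, v.2.2.2.1, q)) v.2.2.2.2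

/-!
The Legendre transform `W = x * p + y * q - u` of a 1-jet is constant along the contact fields
`∂_x + p ∂_u` and `∂_y + q ∂_u`, whose flows are complete on `{W > 0}`. The first two equations say
that `f` is invariant under these flows, so every jet can be moved to one with `x = y = 0`. There
`W = -u`, and the last two equations say that `f` does not depend on `p` and `q`. Hence `f = φ ∘ W`
for a function `φ` of one variable, and the third equation along `t ↦ (1, 0, 0, t, 0)`, where
`W = t`, is Euler's equation `t * dφ/dt + 4 * φ = 0`, whose solutions on `t > 0` are `C / t ^ 4`.
-/

section Calculus

theorem apply_add_smul_eq_of_fderiv_eq_zero {E F : Type*} [NormedAddCommGroup E] [NormedSpace ℝ E]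
    [NormedAddCommGroup F] [NormedSpace ℝ F] {f : E → F} {v e : E}
    (hf : ∀ t : ℝ, DifferentiableAt ℝ f (v + t • e))
    (h0 : ∀ t : ℝ, fderiv ℝ f (v + t • e) e = 0) (t : ℝ) : f (v + t • e) = f v := by
  have hderiv (t : ℝ) : HasDerivAt (fun t : ℝ => f (v + t • e)) 0 t := by
    have hline : HasDerivAt (fun t : ℝ => v + t • e) e t := by
      simpa using ((hasDerivAt_id t).smul_const e).const_add v
    rw [← h0 t]
    exact (hf t).hasFDerivAt.comp_hasDerivAt t hline
  simpa using is_const_of_deriv_eq_zero (fun t => (hderiv t).differentiableAt)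
    (fun t => (hderiv t).deriv) t 0

theorem eq_div_rpow_of_mul_deriv_add_mul_eq_zero {φ φ' : ℝ → ℝ} {a : ℝ}
    (hφ : ∀ t > 0, HasDerivAt φ (φ' t) t) (heuler : ∀ t > 0, t * φ' t + a * φ t = 0)
    {t : ℝ} (ht : 0 < t) : φ t = φ 1 / t ^ a := by
  have hderiv (s : ℝ) (hs : 0 < s) : HasDerivAt (fun s => φ s * s ^ a) 0 s := by
    have hprod : φ' s * s ^ a + φ s * (a * s ^ (a - 1)) = 0 := by
      rw [Real.rpow_sub_one hs.ne']
      field_simp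
      linear_combination s ^ a * heuler s hs
    rw [← hprod]
    exact (hφ s hs).mul (Real.hasDerivAt_rpow_const (Or.inl hs.ne'))
  have hconst : φ t * t ^ a = φ 1 * 1 ^ a :=
    isOpen_Ioi.is_const_of_deriv_eq_zero isPreconnected_Ioi
      (fun s hs => (hderiv s hs).differentiableAt.differentiableWithinAt)
      (fun s hs => (hderiv s hs).deriv) ht (Set.mem_Ioi.2 one_pos)
  rwa [Real.one_rpow, mul_one, ← eq_div_iff (Real.rpow_pos_of_pos ht a).ne'] at hconst

theorem hasFDerivAt_div_rpow {E : Type*} [NormedAddCommGroup E] [NormedSpace ℝ E]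
    {g : E → ℝ} {v : E} (hg : DifferentiableAt ℝ g v) (hv : 0 < g v) (C a : ℝ) :
    HasFDerivAt (fun w => C / g w ^ a) ((-a * (C / g v ^ a) / g v) • fderiv ℝ g v) v := by
  have hpow := ((hasDerivAt_const (g v) C).div (Real.hasDerivAt_rpow_const (Or.inl hv.ne'))
    (Real.rpow_pos_of_pos hv a).ne').comp_hasFDerivAt v hg.hasFDerivAt
  have hcoeff : (0 * g v ^ a - C * (a * g v ^ (a - 1))) / (g v ^ a) ^ 2 =
      -a * (C / g v ^ a) / g v := by
    rw [Real.rpow_sub_one hv.ne']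
    field_simp
    ring
  rwa [hcoeff] at hpow

end Calculus

section Partials

variable {f : Jet1 → ℝ} {v : Jet1}

theorem dX_eq_fderiv (hf : DifferentiableAt ℝ f v) : dX f v = fderiv ℝ f v (1, 0, 0, 0, 0) :=
  (hf.hasFDerivAt.comp_hasDerivAt v.1 ((hasDerivAt_id _).prodMk (hasDerivAt_const _ _))).deriv

theorem dY_eq_fderiv (hf : DifferentiableAt ℝ f v) : dY f v = fderiv ℝ f v (0, 1, 0, 0, 0) :=
  (hf.hasFDerivAt.comp_hasDerivAt v.2.1 ((hasDerivAt_const _ _).prodMk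
    ((hasDerivAt_id _).prodMk (hasDerivAt_const _ _)))).deriv

theorem dU_eq_fderiv (hf : DifferentiableAt ℝ f v) : dU f v = fderiv ℝ f v (0, 0, 1, 0, 0) :=
  (hf.hasFDerivAt.comp_hasDerivAt v.2.2.1 ((hasDerivAt_const _ _).prodMk
    ((hasDerivAt_const _ _).prodMk ((hasDerivAt_id _).prodMk (hasDerivAt_const _ _))))).deriv

theorem dP_eq_fderiv (hf : DifferentiableAt ℝ f v) : dP f v = fderiv ℝ f v (0, 0, 0, 1, 0) :=
  (hf.hasFDerivAt.comp_hasDerivAt v.2.2.2.1 ((hasDerivAt_const _ _).prodMk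
    ((hasDerivAt_const _ _).prodMk ((hasDerivAt_const _ _).prodMk
      ((hasDerivAt_id _).prodMk (hasDerivAt_const _ _)))))).deriv

theorem dQ_eq_fderiv (hf : DifferentiableAt ℝ f v) : dQ f v = fderiv ℝ f v (0, 0, 0, 0, 1) :=
  (hf.hasFDerivAt.comp_hasDerivAt v.2.2.2.2 ((hasDerivAt_const _ _).prodMk
    ((hasDerivAt_const _ _).prodMk ((hasDerivAt_const _ _).prodMk
      ((hasDerivAt_const _ _).prodMk (hasDerivAt_id _)))))).deriv

end Partials

/-- The Legendre transform `x * p + y * q - u` of the 1-jet `(x, y, u, p, q)`, through which every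
integrant factor of the Țițeica operator factors. -/
def legendre (v : Jet1) : ℝ :=
  v.1 * v.2.2.2.1 + v.2.1 * v.2.2.2.2 - v.2.2.1

theorem differentiable_legendre : Differentiable ℝ legendre := by
  unfold legendre
  fun_prop

theorem fderiv_legendre_apply (v e : Jet1) :
    fderiv ℝ legendre v e = e.1 * v.2.2.2.1 + v.1 * e.2.2.2.1 +
      (e.2.1 * v.2.2.2.2 + v.2.1 * e.2.2.2.2) - e.2.2.1 := by
  have hid := hasFDerivAt_id (𝕜 := ℝ) v
  have hlegendre := ((hid.fst.mul hid.snd.snd.snd.fst).add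
    (hid.snd.fst.mul hid.snd.snd.snd.snd)).sub hid.snd.snd.fst
  refine (congrArg (· e) hlegendre.fderiv).trans ?_
  simp only [id_eq, ContinuousLinearMap.comp_id, sub_apply, add_apply, smul_apply,
    ContinuousLinearMap.comp_apply, ContinuousLinearMap.coe_snd', ContinuousLinearMap.coe_fst',
    smul_eq_mul]
  ring

theorem isOpen_legendre_pos : IsOpen {v | 0 < legendre v} :=
  isOpen_lt continuous_const differentiable_legendre.continuous

/-- The system characterizing the variational integrant factors of the Țițeica operator, at a
single jet `v`, with the exponent `4` of the operator replaced by a real parameter `a`. -/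
def IntegrantSystem (a : ℝ) (f : Jet1 → ℝ) (v : Jet1) : Prop :=
  dX f v + v.2.2.2.1 * dU f v = 0 ∧
  dY f v + v.2.2.2.2 * dU f v = 0 ∧
  legendre v * dP f v + a * v.1 * f v = 0 ∧
  legendre v * dQ f v + a * v.2.1 * f v = 0

theorem integrantSystem_iff_fderiv {a : ℝ} {f : Jet1 → ℝ} {v : Jet1}
    (hf : DifferentiableAt ℝ f v) :
    IntegrantSystem a f v ↔
      fderiv ℝ f v (1, 0, v.2.2.2.1, 0, 0) = 0 ∧
      fderiv ℝ f v (0, 1, v.2.2.2.2, 0, 0) = 0 ∧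
      legendre v * fderiv ℝ f v (0, 0, 0, 1, 0) + a * v.1 * f v = 0 ∧
      legendre v * fderiv ℝ f v (0, 0, 0, 0, 1) + a * v.2.1 * f v = 0 := by
  have hX (p : ℝ) : ((1, 0, p, 0, 0) : Jet1) = (1, 0, 0, 0, 0) + p • (0, 0, 1, 0, 0) := by simp
  have hY (q : ℝ) : ((0, 1, q, 0, 0) : Jet1) = (0, 1, 0, 0, 0) + q • (0, 0, 1, 0, 0) := by simp
  rw [IntegrantSystem, hX, hY, map_add, map_add, map_smul, map_smul, dX_eq_fderiv hf,
    dY_eq_fderiv hf, dU_eq_fderiv hf, dP_eq_fderiv hf, dQ_eq_fderiv hf, smul_eq_mul, smul_eq_mul]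

theorem integrantSystem_of_eq_div_legendre_rpow {a C : ℝ} {f : Jet1 → ℝ} {v : Jet1}
    (hf : ∀ w, 0 < legendre w → f w = C / legendre w ^ a) (hv : 0 < legendre v) :
    IntegrantSystem a f v := by
  have hderiv : HasFDerivAt f ((-a * f v / legendre v) • fderiv ℝ legendre v) v := by
    rw [hf v hv]
    refine (hasFDerivAt_div_rpow (differentiable_legendre v) hv C a).congr_of_eventuallyEq ?_
    filter_upwards [isOpen_legendre_pos.mem_nhds hv] with w hw using hf w hw
  rw [integrantSystem_iff_fderiv hderiv.differentiableAt, hderiv.fderiv]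
  simp only [smul_apply, fderiv_legendre_apply, smul_eq_mul]
  field_simp
  exact ⟨by ring, by ring, by ring, by ring⟩

section Invariance

variable {a : ℝ} {f : Jet1 → ℝ}

theorem apply_contact_flow_x (hf : ∀ v, 0 < legendre v → DifferentiableAt ℝ f v)
    (hX : ∀ v, 0 < legendre v → fderiv ℝ f v (1, 0, v.2.2.2.1, 0, 0) = 0) {x y u p q : ℝ}
    (h : 0 < legendre (x, y, u, p, q)) (t : ℝ) :
    f (x + t, y, u + t * p, p, q) = f (x, y, u, p, q) := by
  have hflow (t : ℝ) : ((x, y, u, p, q) : Jet1) + t • (1, 0, p, 0, 0) =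
    (x + t, y, u + t * p, p, q) := by simp
  have hpos (t : ℝ) : 0 < legendre (x + t, y, u + t * p, p, q) := by
    simp only [legendre] at h ⊢
    linarith
  rw [← hflow]
  refine apply_add_smul_eq_of_fderiv_eq_zero (fun t => ?_) (fun t => ?_) t <;> rw [hflow]
  exacts [hf _ (hpos t), hX _ (hpos t)]

theorem apply_contact_flow_y (hf : ∀ v, 0 < legendre v → DifferentiableAt ℝ f v)
    (hY : ∀ v, 0 < legendre v → fderiv ℝ f v (0, 1, v.2.2.2.2, 0, 0) = 0) {x y u p q : ℝ}
    (h : 0 < legendre (x, y, u, p, q)) (t : ℝ) :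
    f (x, y + t, u + t * q, p, q) = f (x, y, u, p, q) := by
  have hflow (t : ℝ) : ((x, y, u, p, q) : Jet1) + t • (0, 1, q, 0, 0) =
    (x, y + t, u + t * q, p, q) := by simp
  have hpos (t : ℝ) : 0 < legendre (x, y + t, u + t * q, p, q) := by
    simp only [legendre] at h ⊢
    linarith
  rw [← hflow]
  refine apply_add_smul_eq_of_fderiv_eq_zero (fun t => ?_) (fun t => ?_) t <;> rw [hflow]
  exacts [hf _ (hpos t), hY _ (hpos t)]

theorem apply_add_p_of_x_eq_zero (hf : ∀ v, 0 < legendre v → DifferentiableAt ℝ f v)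
    (hP : ∀ v, 0 < legendre v → v.1 = 0 → fderiv ℝ f v (0, 0, 0, 1, 0) = 0) {y u p q : ℝ}
    (h : 0 < legendre (0, y, u, p, q)) (t : ℝ) : f (0, y, u, p + t, q) = f (0, y, u, p, q) := by
  have hline (t : ℝ) : ((0, y, u, p, q) : Jet1) + t • (0, 0, 0, 1, 0) = (0, y, u, p + t, q) := by
    simp
  have hpos (t : ℝ) : 0 < legendre (0, y, u, p + t, q) := by
    simpa only [legendre, zero_mul] using h
  rw [← hline]
  refine apply_add_smul_eq_of_fderiv_eq_zero (fun t => ?_) (fun t => ?_) t <;> rw [hline]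
  exacts [hf _ (hpos t), hP _ (hpos t) rfl]

theorem apply_add_q_of_y_eq_zero (hf : ∀ v, 0 < legendre v → DifferentiableAt ℝ f v)
    (hQ : ∀ v, 0 < legendre v → v.2.1 = 0 → fderiv ℝ f v (0, 0, 0, 0, 1) = 0) {x u p q : ℝ}
    (h : 0 < legendre (x, 0, u, p, q)) (t : ℝ) : f (x, 0, u, p, q + t) = f (x, 0, u, p, q) := by
  have hline (t : ℝ) : ((x, 0, u, p, q) : Jet1) + t • (0, 0, 0, 0, 1) = (x, 0, u, p, q + t) := by
    simp
  have hpos (t : ℝ) : 0 < legendre (x, 0, u, p, q + t) := by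
    simpa only [legendre, zero_mul] using h
  rw [← hline]
  refine apply_add_smul_eq_of_fderiv_eq_zero (fun t => ?_) (fun t => ?_) t <;> rw [hline]
  exacts [hf _ (hpos t), hQ _ (hpos t) rfl]

theorem eq_apply_neg_legendre (hf : ∀ v, 0 < legendre v → DifferentiableAt ℝ f v)
    (hsys : ∀ v, 0 < legendre v → IntegrantSystem a f v) {v : Jet1} (hv : 0 < legendre v) :
    f v = f (0, 0, -legendre v, 0, 0) := by
  have hfderiv (w : Jet1) (hw : 0 < legendre w) :=
    (integrantSystem_iff_fderiv (hf w hw)).1 (hsys w hw)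
  have hP (w : Jet1) (hw : 0 < legendre w) (h0 : w.1 = 0) : fderiv ℝ f w (0, 0, 0, 1, 0) = 0 := by
    simpa [h0, hw.ne'] using (hfderiv w hw).2.2.1
  have hQ (w : Jet1) (hw : 0 < legendre w) (h0 : w.2.1 = 0) :
      fderiv ℝ f w (0, 0, 0, 0, 1) = 0 := by
    simpa [h0, hw.ne'] using (hfderiv w hw).2.2.2
  obtain ⟨x, y, u, p, q⟩ := v
  set W := legendre (x, y, u, p, q) with hW
  have hpos (p q : ℝ) : 0 < legendre (0, 0, -W, p, q) := by simpa [legendre] using hv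
  have hy : (0, y, -W + y * q, p, q) = ((x + -x, y, u + -x * p, p, q) : Jet1) := by
    simp only [hW, legendre, add_neg_cancel, Prod.mk.injEq, and_true, true_and]
    ring
  calc f (x, y, u, p, q)
      = f (0, y, -W + y * q, p, q) := by
        rw [hy, apply_contact_flow_x hf (fun w hw => (hfderiv w hw).1) hv]
    _ = f (0, 0, -W, p, q) := by
        simpa using apply_contact_flow_y hf (fun w hw => (hfderiv w hw).2.1) (hpos p q) y
    _ = f (0, 0, -W, 0, q) := by
        simpa using apply_add_p_of_x_eq_zero hf hP (hpos 0 q) p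
    _ = f (0, 0, -W, 0, 0) := by
        simpa using apply_add_q_of_y_eq_zero hf hQ (hpos 0 0) q

theorem apply_eq_apply_of_legendre_eq (hf : ∀ v, 0 < legendre v → DifferentiableAt ℝ f v)
    (hsys : ∀ v, 0 < legendre v → IntegrantSystem a f v) {v w : Jet1} (hv : 0 < legendre v)
    (hvw : legendre v = legendre w) : f v = f w := by
  have hw : 0 < legendre w := hvw ▸ hv
  rw [eq_apply_neg_legendre hf hsys hv, hvw, ← eq_apply_neg_legendre hf hsys hw]

theorem eq_div_legendre_rpow (hf : ∀ v, 0 < legendre v → DifferentiableAt ℝ f v)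
    (hsys : ∀ v, 0 < legendre v → IntegrantSystem a f v) {v : Jet1} (hv : 0 < legendre v) :
    f v = f (1, 0, 0, 1, 0) / legendre v ^ a := by
  have hW (t : ℝ) : legendre (1, 0, 0, t, 0) = t := by simp [legendre]
  have hderiv (t : ℝ) (ht : t > 0) :
      HasDerivAt (fun t => f (1, 0, 0, t, 0)) (dP f (1, 0, 0, t, 0)) t :=
    ((hf (1, 0, 0, t, 0) (by rwa [hW])).comp t
      (f := fun t : ℝ => ((1, 0, 0, t, 0) : Jet1)) (by fun_prop)).hasDerivAt
  have heuler (t : ℝ) (ht : t > 0) :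
      t * dP f (1, 0, 0, t, 0) + a * f (1, 0, 0, t, 0) = 0 := by
    simpa [hW] using (hsys (1, 0, 0, t, 0) (by rwa [hW])).2.2.1
  rw [apply_eq_apply_of_legendre_eq hf hsys hv (hW _).symm]
  exact eq_div_rpow_of_mul_deriv_add_mul_eq_zero hderiv heuler hv

end Invariance

theorem titeica_integrant_factor_general (a : ℝ) (f : Jet1 → ℝ)
    (hf : DifferentiableOn ℝ f {v | 0 < legendre v}) :
    (∀ v, 0 < legendre v → IntegrantSystem a f v) ↔
      ∃ C : ℝ, ∀ v, 0 < legendre v → f v = C / legendre v ^ a := by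
  have hdiff (v : Jet1) (hv : 0 < legendre v) : DifferentiableAt ℝ f v :=
    hf.differentiableAt (isOpen_legendre_pos.mem_nhds hv)
  exact ⟨fun hsys => ⟨_, fun _ => eq_div_legendre_rpow hdiff hsys⟩,
    fun ⟨_, hC⟩ _ => integrantSystem_of_eq_div_legendre_rpow hC⟩

/-- Characterization of the variational integrant factor for the Țițeica operator
(Theorem 5 of the paper): on `Ω = {x·p + y·q − u > 0}`, a C¹ function `f` satisfies
the system `f_x + p·f_u = 0`, `f_y + q·f_u = 0`, `(x·p+y·q−u)·f_p + 4x·f = 0`,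
`(x·p+y·q−u)·f_q + 4y·f = 0` iff `f = C/(x·p + y·q − u)⁴` for some constant `C`. -/
theorem titeica_integrant_factor
    (Ω : Set Jet1)
    (hΩ : Ω = {v : Jet1 | v.1 * v.2.2.2.1 + v.2.1 * v.2.2.2.2 - v.2.2.1 > 0})
    (f : Jet1 → ℝ) (hf : ContDiffOn ℝ 1 f Ω) :
    (∀ v ∈ Ω,
      dX f v + v.2.2.2.1 * dU f v = 0 ∧
      dY f v + v.2.2.2.2 * dU f v = 0 ∧
      (v.1 * v.2.2.2.1 + v.2.1 * v.2.2.2.2 - v.2.2.1) * dP f v + 4 * v.1 * f v = 0 ∧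
      (v.1 * v.2.2.2.1 + v.2.1 * v.2.2.2.2 - v.2.2.1) * dQ f v + 4 * v.2.1 * f v = 0)
    ↔ ∃ C : ℝ, ∀ v ∈ Ω,
        f v = C / (v.1 * v.2.2.2.1 + v.2.1 * v.2.2.2.2 - v.2.2.1) ^ 4 := by
  subst hΩ
  exact_mod_cast titeica_integrant_factor_general 4 f (hf.differentiableOn one_ne_zero)
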